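/- arXiv:2006.08996 — 9 statements merged into one kernel-verified Lean document; each statement's English description precedes it below -/
import Mathlib

section
/- Inversion of the formal meet on the right (rule γ) is admissible in the calculus K: for all formal elements a, b and every (possibly compound) left side c, if the sequent c ≤ a ∧ b is derivable, then the sequent c ≤ a is derivable (and likewise c ≤ b is derivable). -/
/-!
Induction on the derivation of `c ≤ a ∧ b`. The only right rule that produces a meet on the
right is (a), and its two premises are exactly the two conclusions. Every other rule that can
end the derivation acts on the left side only: (d), (f) and (g) keep the right side and are
reapplied to the two sequents given by the induction hypothesis, while (e) allows an arbitrary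
right side.
-/

/-- Formal elements of the calculus K over a set `P` of prime elements:
primes, formal binary meets, formal negations (orthocomplements), and
formal countable meets. -/
inductive Elem (P : Type) : Type
  | prime : P → Elem P
  | meet : Elem P → Elem P → Elem P
  | neg : Elem P → Elem P
  | inf : (ℕ → Elem P) → Elem P

/-- The finite combination of formal elements represented by a formal element:
a left side `a₁ ∧ ⋯ ∧ aₘ` is regarded up to order and association, so it is the
multiset of its top-level conjuncts. -/
def Elem.parts {P : Type} : Elem P → Multiset (Elem P)
  | .meet a b => a.parts + b.parts
  | a => {a}

/-- Derivability of sequents in the calculus K over the preordered set `(P, r)`.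
A sequent has a left side which is a finite combination (a multiset, possibly
empty) of formal elements and a right side which is a formal element or empty
(`none`). -/
inductive Der {P : Type} (r : P → P → Prop) : Multiset (Elem P) → Option (Elem P) → Prop
  /-- basic sequents: `p ≤ q` for prime `p, q` with `p ⊑ q` in `P`. -/
  | basic {p q : P} : r p q → Der r {Elem.prime p} (some (Elem.prime q))
  /-- rule (a): from `c ≤ a` and `c ≤ b` infer `c ≤ a ∧ b`. -/
  | ruleA {Γ : Multiset (Elem P)} {a b : Elem P} :
      Der r Γ (some a) → Der r Γ (some b) → Der r Γ (some (Elem.meet a b))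
  /-- rule (b): from `a ∧ c ≤ ∅` infer `c ≤ ¬a`. -/
  | ruleB {Γ : Multiset (Elem P)} {a : Elem P} :
      Der r (a.parts + Γ) none → Der r Γ (some (Elem.neg a))
  /-- rule (c), the ω-rule: from `c ≤ aₙ` for every `n` infer `c ≤ ⋀ₙ aₙ`. -/
  | ruleC {Γ : Multiset (Elem P)} {f : ℕ → Elem P} :
      (∀ n, Der r Γ (some (f n))) → Der r Γ (some (Elem.inf f))
  /-- rule (d): from `a ≤ c` infer `a ∧ b ≤ c` (`c` possibly empty). -/
  | ruleD {Γ : Multiset (Elem P)} {d : Option (Elem P)} (b : Elem P) :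
      Der r Γ d → Der r (b.parts + Γ) d
  /-- rule (e): from `a ≤ b` infer `a ∧ ¬b ≤ c` (`c` possibly empty). -/
  | ruleE {Γ : Multiset (Elem P)} {d : Option (Elem P)} {b : Elem P} :
      Der r Γ (some b) → Der r (Elem.neg b ::ₘ Γ) d
  /-- rule (f): from `aₙ ∧ b ≤ c` infer `(⋀ₙ aₙ) ∧ b ≤ c`. -/
  | ruleF {Γ : Multiset (Elem P)} {d : Option (Elem P)} {f : ℕ → Elem P} (n : ℕ) :
      Der r ((f n).parts + Γ) d → Der r (Elem.inf f ::ₘ Γ) d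
  /-- rule (g), contraction: from `a ∧ a ∧ b ≤ c` infer `a ∧ b ≤ c`. -/
  | ruleG {Γ : Multiset (Elem P)} {d : Option (Elem P)} {a : Elem P} :
      Der r (a.parts + a.parts + Γ) d → Der r (a.parts + Γ) d

/-- Inversion of the formal meet on the right (rule γ) is admissible in the
calculus K: for all formal elements `a`, `b` and every (possibly compound)
left side `c`, if `c ≤ a ∧ b` is derivable, then `c ≤ a` is derivable (and
likewise `c ≤ b` is derivable). -/
theorem ruleGamma_admissible {P : Type} (r : P → P → Prop)
    (a b : Elem P) (c : Multiset (Elem P))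
    (h : Der r c (some (Elem.meet a b))) :
    Der r c (some a) ∧ Der r c (some b) := by
  generalize hd : some (Elem.meet a b) = d at h
  induction h with
  | basic _ => cases hd
  | ruleA h₁ h₂ _ _ =>
    cases hd
    exact ⟨h₁, h₂⟩
  | ruleB _ _ => cases hd
  | ruleC _ _ => cases hd
  | ruleD e _ ih => exact ⟨.ruleD e (ih hd).1, .ruleD e (ih hd).2⟩
  | ruleE h _ => exact ⟨.ruleE h, .ruleE h⟩
  | ruleF n _ ih => exact ⟨.ruleF n (ih hd).1, .ruleF n (ih hd).2⟩
  | ruleG _ ih => exact ⟨.ruleG (ih hd).1, .ruleG (ih hd).2⟩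
end

section
/- Inversion of formal negation (rule δ) is admissible in the calculus K: for every formal element a and every (possibly compound) left side c, if the sequent c ≤ ¬a is derivable, then the sequent a ∧ c ≤ ∅ is derivable. -/
/-- Inversion of formal negation (rule δ) is admissible in the calculus K:
for every formal element `a` and every (possibly compound) left side `c`,
if `c ≤ ¬a` is derivable, then `a ∧ c ≤ ∅` is derivable. -/
theorem ruleDelta_admissible {P : Type} (r : P → P → Prop)
    (a : Elem P) (c : Multiset (Elem P))
    (h : Der r c (some (Elem.neg a))) :
    Der r (a.parts + c) none := by
  generalize hd : some (Elem.neg a) = d at h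
  induction h with
  | basic _ => simp at hd
  | ruleA _ _ _ _ => simp at hd
  | ruleC _ _ => simp at hd
  | ruleB h _ =>
    simp only [Option.some.injEq, Elem.neg.injEq] at hd
    subst hd
    exact h
  | ruleD b _ ih =>
    rw [add_left_comm]
    exact Der.ruleD b (ih hd)
  | ruleE h _ => exact Der.ruleD a (Der.ruleE h)
  | ruleF n _ ih =>
    rw [Multiset.add_cons]
    refine Der.ruleF n ?_
    rw [add_left_comm]
    exact ih hd
  | ruleG _ ih =>
    rw [add_left_comm]
    refine Der.ruleG ?_
    rw [add_left_comm]
    exact ih hd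
end

section
/- Inversion of the formal countable meet (rule ε) is admissible in the calculus K: for every sequence (aₙ)ₙ∈ℕ in K and every (possibly compound) left side c, if the sequent c ≤ ⋀ₙ aₙ is derivable, then for every n the sequent c ≤ aₙ is derivable. -/
/-- Inversion of the formal countable meet (rule ε) is admissible in the
calculus K: for every sequence `(aₙ)` in K and every (possibly compound)
left side `c`, if `c ≤ ⋀ₙ aₙ` is derivable, then for every `n` the sequent
`c ≤ aₙ` is derivable. -/
theorem ruleEpsilon_admissible {P : Type} (r : P → P → Prop)
    (f : ℕ → Elem P) (c : Multiset (Elem P))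
    (h : Der r c (some (Elem.inf f))) :
    ∀ n, Der r c (some (f n)) := by
  intro n
  generalize hd : some (Elem.inf f) = d at h
  induction h with
  | basic _ => simp at hd
  | ruleA _ _ _ _ => simp at hd
  | ruleB _ _ => simp at hd
  | ruleC hn _ =>
    obtain rfl : f = _ := by simpa using hd
    exact hn n
  | ruleD b _ ih => exact .ruleD b (ih hd)
  | ruleE hb _ => exact .ruleE hb
  | ruleF m _ ih => exact .ruleF m (ih hd)
  | ruleG _ ih => exact .ruleG (ih hd)
end

section
/- Conservativity of K over P: for all prime elements p, q ∈ P, the sequent p ≤ q is derivable in the calculus K if and only if p ⊑ q holds in the preordered set P; that is, P is a part of K. -/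
/-- The induction behind conservativity. The left side is allowed to be any multiset of copies
of `p`, so that the hypothesis passes to the premises of weakening and contraction. -/
theorem Der.rel_of_forall_eq_prime {P : Type} {r : P → P → Prop} {p q : P}
    {Γ : Multiset (Elem P)} {d : Option (Elem P)} (h : Der r Γ d)
    (hΓ : ∀ x ∈ Γ, x = Elem.prime p) (hd : d = some (Elem.prime q)) : r p q := by
  induction h with
  | basic hr =>
    have h1 := hΓ _ (Multiset.mem_singleton_self _)
    cases h1
    cases hd
    exact hr
  | ruleA => cases hd
  | ruleB => cases hd
  | ruleC => cases hd
  | ruleD b _ ih => exact ih (fun x hx => hΓ x (Multiset.mem_add.2 (Or.inr hx))) hd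
  | ruleE => cases hΓ _ (Multiset.mem_cons_self _ _)
  | ruleF => cases hΓ _ (Multiset.mem_cons_self _ _)
  | ruleG _ ih =>
    refine ih (fun x hx => hΓ x ?_) hd
    simpa only [Multiset.mem_add, or_self] using hx

/-- Conservativity of K over P: for all prime elements `p, q ∈ P`, the
sequent `p ≤ q` is derivable in the calculus K if and only if `p ⊑ q` holds
in the preordered set `P`; that is, `P` is a part of `K`. -/
theorem K_conservative_over_P {P : Type} (r : P → P → Prop) (p q : P) :
    Der r {Elem.prime p} (some (Elem.prime q)) ↔ r p q := by
  refine ⟨fun h => h.rel_of_forall_eq_prime (fun x hx => ?_) rfl, Der.basic⟩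
  exact Multiset.mem_singleton.1 hx
end

section
/- Conservativity of N over the prime formulas: every derivable sequent of N whose left and right sides are prime formulas or empty is correct in terms of content, i.e. is a basic sequent: if P → Q is derivable then v(P) implies v(Q); if → P is derivable then v(P) holds; if P → is derivable then v(P) fails; and the empty sequent → is not derivable. -/
/-!
The calculus is sound for the Tarskian truth definition: each formula has a truth value extending
`v` (`Fml.Holds`), and every rule preserves the property that the right side is true whenever all
conjuncts of the left side are (`NDer.sound`). An empty right side is read as falsity. A sequent
between prime formulas or empty sides is true in this sense exactly when it is basic, so
conservativity is soundness read off at such sequents.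
-/

/-- Formulas of the calculus N over a set `Φ` of prime formulas:
prime formulas, conjunctions, negations, and formal universal
quantifications over ℕ-indexed families. -/
inductive Fml (Φ : Type) : Type
  | prime : Φ → Fml Φ
  | conj : Fml Φ → Fml Φ → Fml Φ
  | neg : Fml Φ → Fml Φ
  | all : (ℕ → Fml Φ) → Fml Φ

/-- The finite conjunction of formulas represented by a formula: a left side
`𝔄₁ ∧ ⋯ ∧ 𝔄ₘ` is regarded up to order and association (rules (h) and (i)),
so it is the multiset of its top-level conjuncts. -/
def Fml.parts {Φ : Type} : Fml Φ → Multiset (Fml Φ)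
  | .conj A B => A.parts + B.parts
  | A => {A}

/-- Derivability of sequents in the calculus N over the prime formulas `Φ`
with valuation `v`. A sequent has a left side which is a finite conjunction
(a multiset, possibly empty) of formulas and a right side which is a formula
or empty (`none`). Exchange and associativity of conjunction on the left
(rules (h) and (i)) are built into the multiset representation. -/
inductive NDer {Φ : Type} (v : Φ → Prop) : Multiset (Fml Φ) → Option (Fml Φ) → Prop
  /-- basic sequents `P → Q` whenever `v P` implies `v Q`. -/
  | basicPQ {P Q : Φ} : (v P → v Q) → NDer v {Fml.prime P} (some (Fml.prime Q))
  /-- basic sequents `→ P` whenever `v P` holds. -/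
  | basicT {P : Φ} : v P → NDer v 0 (some (Fml.prime P))
  /-- basic sequents `P →` whenever `v P` fails. -/
  | basicF {P : Φ} : ¬ v P → NDer v {Fml.prime P} none
  /-- rule (a): from `ℭ → 𝔄` and `ℭ → 𝔅` infer `ℭ → 𝔄 ∧ 𝔅`. -/
  | ruleA {Γ : Multiset (Fml Φ)} {A B : Fml Φ} :
      NDer v Γ (some A) → NDer v Γ (some B) → NDer v Γ (some (Fml.conj A B))
  /-- rule (b): from `𝔄 ∧ ℭ →` infer `ℭ → 𝔄̄`. -/
  | ruleB {Γ : Multiset (Fml Φ)} {A : Fml Φ} :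
      NDer v (A.parts + Γ) none → NDer v Γ (some (Fml.neg A))
  /-- rule (c), the ω-rule: from `ℭ → 𝔄(n)` for every `n` infer `ℭ → (x)𝔄(x)`. -/
  | ruleC {Γ : Multiset (Fml Φ)} {f : ℕ → Fml Φ} :
      (∀ n, NDer v Γ (some (f n))) → NDer v Γ (some (Fml.all f))
  /-- rule (d): from `𝔄 → ℭ` infer `𝔄 ∧ 𝔅 → ℭ` (`ℭ` possibly empty). -/
  | ruleD {Γ : Multiset (Fml Φ)} {C : Option (Fml Φ)} (B : Fml Φ) :
      NDer v Γ C → NDer v (B.parts + Γ) C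
  /-- rule (e): from `𝔄 → 𝔅` infer `𝔄 ∧ 𝔅̄ → ℭ` (`ℭ` possibly empty). -/
  | ruleE {Γ : Multiset (Fml Φ)} {C : Option (Fml Φ)} {B : Fml Φ} :
      NDer v Γ (some B) → NDer v (Fml.neg B ::ₘ Γ) C
  /-- rule (f): from `𝔄(n) ∧ 𝔅 → ℭ` infer `(x)𝔄(x) ∧ 𝔅 → ℭ`. -/
  | ruleF {Γ : Multiset (Fml Φ)} {C : Option (Fml Φ)} {f : ℕ → Fml Φ} (n : ℕ) :
      NDer v ((f n).parts + Γ) C → NDer v (Fml.all f ::ₘ Γ) C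
  /-- rule (g), contraction: from `𝔄 ∧ 𝔄 ∧ 𝔅 → ℭ` infer `𝔄 ∧ 𝔅 → ℭ`. -/
  | ruleG {Γ : Multiset (Fml Φ)} {C : Option (Fml Φ)} {A : Fml Φ} :
      NDer v (A.parts + A.parts + Γ) C → NDer v (A.parts + Γ) C

/-- Classical truth of a formula under the valuation `v`, the quantifier ranging over ℕ. -/
def Fml.Holds {Φ : Type} (v : Φ → Prop) : Fml Φ → Prop
  | .prime P => v P
  | .conj A B => A.Holds v ∧ B.Holds v
  | .neg A => ¬ A.Holds v
  | .all f => ∀ n, (f n).Holds v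

/-- Truth of the right side of a sequent; the empty right side counts as false. -/
def RightHolds {Φ : Type} (v : Φ → Prop) : Option (Fml Φ) → Prop
  | some A => A.Holds v
  | none => False

/-- Splitting a formula into its top-level conjuncts does not change its truth value. -/
theorem Fml.forall_parts_holds {Φ : Type} (v : Φ → Prop) (A : Fml Φ) :
    (∀ B ∈ A.parts, B.Holds v) ↔ A.Holds v := by
  induction A with
  | conj A B ihA ihB =>
    simp only [Fml.parts, Multiset.mem_add, or_imp, forall_and, ihA, ihB, Fml.Holds]
  | prime P => simp [Fml.parts]
  | neg A => simp [Fml.parts]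
  | all f => simp [Fml.parts]

theorem NDer.sound {Φ : Type} {v : Φ → Prop} {Γ : Multiset (Fml Φ)} {C : Option (Fml Φ)}
    (h : NDer v Γ C) : (∀ B ∈ Γ, B.Holds v) → RightHolds v C := by
  induction h with
  | basicPQ h => simpa [RightHolds, Fml.Holds] using h
  | basicT h => exact fun _ => h
  | basicF h => simpa [RightHolds, Fml.Holds] using h
  | ruleA _ _ ihA ihB => exact fun hΓ => ⟨ihA hΓ, ihB hΓ⟩
  | ruleB _ ih =>
    simp only [Multiset.mem_add, or_imp, forall_and, Fml.forall_parts_holds] at ih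
    exact fun hΓ hA => ih ⟨hA, hΓ⟩
  | ruleC _ ih => exact fun hΓ n => ih n hΓ
  | ruleD B _ ih => exact fun hΓ => ih fun A hA => hΓ A (Multiset.mem_add.2 (Or.inr hA))
  | ruleE _ ih =>
    simp only [Multiset.mem_cons, forall_eq_or_imp]
    exact fun hΓ => absurd (ih hΓ.2) hΓ.1
  | ruleF n _ ih =>
    simp only [Multiset.mem_add, or_imp, forall_and, Fml.forall_parts_holds] at ih
    simp only [Multiset.mem_cons, forall_eq_or_imp]
    exact fun hΓ => ih ⟨hΓ.1 n, hΓ.2⟩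
  | ruleG _ ih =>
    simp only [Multiset.mem_add, or_self] at ih ⊢
    exact ih

/-- Conservativity of N over the prime formulas: every derivable sequent of N
whose left and right sides are prime formulas or empty is correct in terms of
content, i.e. is a basic sequent: if `P → Q` is derivable then `v P` implies
`v Q`; if `→ P` is derivable then `v P` holds; if `P →` is derivable then
`v P` fails; and the empty sequent `→` is not derivable. -/
theorem N_conservative_over_primes {Φ : Type} (v : Φ → Prop) :
    (∀ P Q : Φ, NDer v {Fml.prime P} (some (Fml.prime Q)) → (v P → v Q)) ∧
    (∀ P : Φ, NDer v 0 (some (Fml.prime P)) → v P) ∧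
    (∀ P : Φ, NDer v {Fml.prime P} none → ¬ v P) ∧
    ¬ NDer v (0 : Multiset (Fml Φ)) none := by
  refine ⟨fun P Q h hP => h.sound ?_, fun P h => h.sound ?_, fun P h hP => h.sound ?_,
    fun h => h.sound ?_⟩
  · simpa [Fml.Holds] using hP
  · simp
  · simpa [Fml.Holds] using hP
  · simp
end

section
/- The projection rules (rules l and m) are admissible in the calculus N: for all formulas 𝔄, 𝔅 and every left side ℭ, if the sequent ℭ → 𝔄 ∧ 𝔅 is derivable in N, then both ℭ → 𝔄 and ℭ → 𝔅 are derivable in N. -/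
/-- The projection rules (rules l and m) are admissible in the calculus N:
for all formulas `𝔄`, `𝔅` and every left side `ℭ`, if `ℭ → 𝔄 ∧ 𝔅` is
derivable in N, then both `ℭ → 𝔄` and `ℭ → 𝔅` are derivable in N. -/
theorem rulesLM_admissible {Φ : Type} (v : Φ → Prop)
    (A B : Fml Φ) (Γ : Multiset (Fml Φ))
    (h : NDer v Γ (some (Fml.conj A B))) :
    NDer v Γ (some A) ∧ NDer v Γ (some B) := by
  -- The right side is generalized to a variable so that the induction applies.
  generalize hC : some (Fml.conj A B) = C at h
  induction h with
  | basicPQ _ => cases hC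
  | basicT _ => cases hC
  | basicF _ => cases hC
  | ruleA hA hB => cases hC; exact ⟨hA, hB⟩
  | ruleB _ => cases hC
  | ruleC _ => cases hC
  | ruleD D _ ih => exact ⟨.ruleD D (ih hC).1, .ruleD D (ih hC).2⟩
  -- The conclusion of rule (e) has an arbitrary right side.
  | ruleE h => exact ⟨.ruleE h, .ruleE h⟩
  | ruleF n _ ih => exact ⟨.ruleF n (ih hC).1, .ruleF n (ih hC).2⟩
  | ruleG _ ih => exact ⟨.ruleG (ih hC).1, .ruleG (ih hC).2⟩
end

section
/- The universal-instantiation rule (rule o) is admissible in the calculus N: for every ℕ-indexed family of formulas (𝔄(n))ₙ∈ℕ and every left side ℭ, if the sequent ℭ → (x)𝔄(x) is derivable in N, then for every n the sequent ℭ → 𝔄(n) is derivable in N. -/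
/-- The universal-instantiation rule (rule o) is admissible in the calculus N:
for every ℕ-indexed family of formulas `(𝔄(n))` and every left side `ℭ`, if
`ℭ → (x)𝔄(x)` is derivable in N, then for every `n` the sequent `ℭ → 𝔄(n)`
is derivable in N. -/
theorem ruleO_admissible {Φ : Type} (v : Φ → Prop)
    (f : ℕ → Fml Φ) (Γ : Multiset (Fml Φ))
    (h : NDer v Γ (some (Fml.all f))) :
    ∀ n, NDer v Γ (some (f n)) := by
  intro n
  -- Induction on the derivation of `Γ → (x)𝔄(x)`. Only the ω-rule introduces a quantifier on
  -- the right, and `Γ → 𝔄(n)` is one of its premises; rules (d), (e), (f), (g) act on the left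
  -- for an arbitrary right side, so they carry over with `𝔄(n)` in place of `(x)𝔄(x)`.
  generalize hC : some (Fml.all f) = C at h
  induction h with
  | ruleC hprem _ =>
    cases hC
    exact hprem n
  | ruleD B _ ih => exact .ruleD B (ih hC)
  | ruleE hB _ => exact .ruleE hB
  | ruleF m _ ih => exact .ruleF m (ih hC)
  | ruleG _ ih => exact .ruleG (ih hC)
  | _ => cases hC
end

section
/- Identity sequents are derivable in the calculus N: for every formula 𝔄, the sequent 𝔄 → 𝔄 is derivable in N (so adding all sequents 𝔄 → 𝔄 to the basic sequents does not enlarge the set of derivable sequents). -/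
/-- Identity sequents are derivable in the calculus N: for every formula `𝔄`,
the sequent `𝔄 → 𝔄` is derivable in N (so adding all sequents `𝔄 → 𝔄` to the
basic sequents does not enlarge the set of derivable sequents). -/
theorem identity_derivable {Φ : Type} (v : Φ → Prop) (A : Fml Φ) :
    NDer v A.parts (some A) := by
  induction A with
  | prime P => exact .basicPQ id
  | conj A B ihA ihB =>
    refine .ruleA ?_ (.ruleD A ihB)
    rw [Fml.parts, add_comm]
    exact .ruleD B ihA
  | neg A ih =>
    refine .ruleB ?_
    change NDer v (A.parts + {A.neg}) none
    rw [add_comm, Multiset.singleton_add]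
    exact .ruleE ih
  | all f ih =>
    refine .ruleC fun n => .ruleF (Γ := 0) n ?_
    rw [add_zero]
    exact ih n
end

section
/- Double negation elimination for all formulas in the calculus N: assume every prime formula is decided, i.e. for every P ∈ Φ either v(P) holds or v(P) fails (so either → P or P → is a basic sequent). Then for every formula 𝔄, the sequent 𝔄̄̄ → 𝔄 (double negation of 𝔄 on the left) is derivable in N. -/
/-- Each formula is provable from the empty left side or refutable. -/
theorem NDer.decided {Φ : Type} {v : Φ → Prop} (hdec : ∀ P : Φ, v P ∨ ¬ v P) (A : Fml Φ) :
    NDer v 0 (some A) ∨ NDer v A.parts none := by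
  induction A with
  | prime P => exact (hdec P).imp .basicT .basicF
  | conj A B ihA ihB =>
    rcases ihA with hA | hA
    · rcases ihB with hB | hB
      · exact .inl (.ruleA hA hB)
      · exact .inr (.ruleD A hB)
    · right
      rw [Fml.parts, add_comm]
      exact .ruleD B hA
  | neg A ih =>
    rcases ih with h | h
    · exact .inr (.ruleE h)
    · exact .inl (.ruleB (by rwa [add_zero]))
  | all f ih =>
    by_cases hall : ∀ n, NDer v 0 (some (f n))
    · exact .inl (.ruleC hall)
    · obtain ⟨n, hn⟩ := not_forall.mp hall
      refine .inr (.ruleF (Γ := 0) n ?_)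
      rw [add_zero]
      exact (ih n).resolve_left hn

/-- Double negation elimination for all formulas in the calculus N: assume
every prime formula is decided, i.e. for every `P ∈ Φ` either `v P` holds or
`v P` fails. Then for every formula `𝔄`, the sequent `𝔄̄̄ → 𝔄` (double
negation of `𝔄` on the left) is derivable in N. -/
theorem double_neg_all {Φ : Type} (v : Φ → Prop)
    (hdec : ∀ P : Φ, v P ∨ ¬ v P) (A : Fml Φ) :
    NDer v {Fml.neg (Fml.neg A)} (some A) := by
  rcases NDer.decided hdec A with h | h
  · exact .ruleD (Fml.neg (Fml.neg A)) h
  · exact .ruleE (.ruleB (by rwa [add_zero]))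
end
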